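/- The Bunkbed Conjecture fails for the conditioned model: for G_1 with T=\{2,5,8\} and p=1/2, the conditioned bunkbed percolation \mathcal{E}_T satisfies \mathbb{P}(1^- \to 9^-) < \mathbb{P}(1^- \to 9^+). -/

import Mathlib

/-- Edges of the bunkbed graph of a directed graph on vertex type `V`:
`horiz u v ε` is the copy of the directed edge `(u,v)` in bunk `ε`
(`false` = lower bunk `-`, `true` = upper bunk `+`); `vert w` is the
bidirected vertical edge `(w⁻, w⁺)`. -/
inductive BBEdge (V : Type) : Type
  | horiz : V → V → Bool → BBEdge V
  | vert  : V → BBEdge V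
deriving DecidableEq

/-- The `F`-mirroring map on single edges: vertical edges are fixed, a horizontal
edge whose shadow lies in `F` is sent to its mirrored copy in the other bunk, and
horizontal edges with shadow outside `F` are fixed. -/
def mir {V : Type} [DecidableEq V] (F : Finset (V × V)) : BBEdge V → BBEdge V
  | .horiz u v ε => if (u, v) ∈ F then .horiz u v (!ε) else .horiz u v ε
  | .vert w => .vert w

/-- The `F`-mirrored subgraph `M(H,F)`. -/
def M {V : Type} [DecidableEq V] (H : Finset (BBEdge V)) (F : Finset (V × V)) :
    Finset (BBEdge V) :=
  H.image (mir F)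
/-- The edge set of the bunkbed graph of the directed graph with vertex set `Vs`
and edge set `E`: the vertical edges at all vertices together with the two
horizontal copies of each edge. -/
def bbEdges {V : Type} [DecidableEq V] (Vs : Finset V) (E : Finset (V × V)) :
    Finset (BBEdge V) :=
  Vs.image BBEdge.vert ∪ E.image (fun p => BBEdge.horiz p.1 p.2 false) ∪
    E.image (fun p => BBEdge.horiz p.1 p.2 true)
/-- Probability of the event `A` under uniform (`p = 1/2`) Bernoulli bond
percolation on the edge set `s`: a subgraph is a uniformly random subset of `s`. -/
noncomputable def Pr {V : Type} [DecidableEq V] (s : Finset (BBEdge V))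
    (A : Finset (BBEdge V) → Prop) : ℚ :=
  letI := Classical.decPred A
  ((s.powerset.filter A).card : ℚ) / (s.powerset.card : ℚ)

/-- Conditional probability of `A` given `C` under uniform percolation on `s`. -/
noncomputable def CondPr {V : Type} [DecidableEq V] (s : Finset (BBEdge V))
    (C A : Finset (BBEdge V) → Prop) : ℚ :=
  Pr s (fun H => A H ∧ C H) / Pr s C

/-- One step of directed traversal in a subgraph `H` of the bunkbed graph:
horizontal edges are used in their direction within a bunk, and vertical edges
may be traversed in both directions. Vertices of the bunkbed graph are pairs
`(w, ε)` with `ε : Bool` the bunk label (`false` = `-`, `true` = `+`). -/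
def bbStep {V : Type} [DecidableEq V] (H : Finset (BBEdge V)) :
    V × Bool → V × Bool → Prop := fun a b =>
  (a.1 = b.1 ∧ a.2 ≠ b.2 ∧ BBEdge.vert a.1 ∈ H) ∨
    (a.2 = b.2 ∧ BBEdge.horiz a.1 b.1 a.2 ∈ H)

/-- Directed reachability `x → y` in a subgraph of the bunkbed graph. -/
def bbReach {V : Type} [DecidableEq V] (H : Finset (BBEdge V))
    (a b : V × Bool) : Prop :=
  Relation.ReflTransGen (bbStep H) a b
/-- The conditioning event of the conditioned bunkbed model `𝓔_T`: all vertices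
of `T` are posts. -/
def postCond {V : Type} [DecidableEq V] (T : Finset V)
    (H : Finset (BBEdge V)) : Prop :=
  ∀ t ∈ T, BBEdge.vert t ∈ H

/-- The edge set of the graph `G₁` of Przybyłowski's counterexample, on
vertices `1,…,9`. -/
def E1 : Finset (ℕ × ℕ) :=
  {(1,2), (1,4), (2,3), (3,4), (4,5), (3,7), (5,6), (6,7), (6,9), (7,8), (8,9)}

/-- The vertex set of `G₁`. -/
def V1 : Finset ℕ := {1, 2, 3, 4, 5, 6, 7, 8, 9}

/-- The conditioning set `T = {2,5,8}`. -/
def T1 : Finset ℕ := {2, 5, 8}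

/-- The edge set of the bunkbed graph of `G₁`. -/
def s1 : Finset (BBEdge ℕ) := bbEdges V1 E1

/-- The event `F` that the post set is exactly `{2,5,8}`. -/
def exactPosts (H : Finset (BBEdge ℕ)) : Prop :=
  ∀ w : ℕ, BBEdge.vert w ∈ H ↔ w ∈ T1


/-- The lower and upper entries of a pair of truth values indexed by bunks. -/
abbrev BunkPair : Type := Bool × Bool

/-- The entry of a pair belonging to a bunk. -/
def BunkPair.entry (p : BunkPair) : Bool → Bool
  | false => p.1
  | true => p.2

/-- The vertex of the shadow at which an edge of the bunkbed graph ends. -/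
def BBEdge.target {V : Type} : BBEdge V → V
  | .horiz _ v _ => v
  | .vert w => w

/-- The two vertices whose reachability has to be remembered after `1, …, n` have been
processed; `0` is an isolated dummy vertex. -/
def frontierPair : ℕ → ℕ × ℕ
  | 1 => (0, 1)
  | 2 => (1, 2)
  | 3 => (1, 3)
  | 4 => (3, 4)
  | 5 => (3, 5)
  | 6 => (3, 6)
  | 7 => (6, 7)
  | 8 => (6, 8)
  | 9 => (6, 9)
  | _ => (0, 0)

/-- Whether `(n + 1, ε)` is the starting point `1⁻` or is entered by a horizontal edge of `H`
from the frontier vertices, whose reachability is recorded by `σ`. -/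
def enters (n : ℕ) (σ : BunkPair × BunkPair) (H : Finset (BBEdge ℕ)) (ε : Bool) : Bool :=
  decide (n = 0 ∧ ε = false) ||
    (decide (BBEdge.horiz (frontierPair n).1 (n + 1) ε ∈ H) && σ.1.entry ε) ||
    (decide (BBEdge.horiz (frontierPair n).2 (n + 1) ε ∈ H) && σ.2.entry ε)

/-- Process the vertex `n + 1`. If it is a vertex of `T1` that is not a post, nothing is
recorded as reachable any more. -/
def advance (n : ℕ) (σ : BunkPair × BunkPair) (H : Finset (BBEdge ℕ)) : BunkPair × BunkPair :=
  if n + 1 ∈ T1 ∧ BBEdge.vert (n + 1) ∉ H then ((false, false), (false, false))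
  else
    (if (frontierPair (n + 1)).1 = (frontierPair n).1 then σ.1 else σ.2,
      (enters n σ H false || (decide (BBEdge.vert (n + 1) ∈ H) && enters n σ H true),
        enters n σ H true || (decide (BBEdge.vert (n + 1) ∈ H) && enters n σ H false)))

/-- The reachability of the frontier vertices after the vertices `1, …, n`. -/
def explore (H : Finset (BBEdge ℕ)) : ℕ → BunkPair × BunkPair
  | 0 => ((false, false), (false, false))
  | n + 1 => advance n (explore H n) H

/-- The number of completions reaching `9⁻` minus the number reaching `9⁺`, as a function of
the reachability of the frontier after the vertices `1, …, n`. -/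
def surplus (n : ℕ) (σ : BunkPair × BunkPair) : ℤ :=
  (match n with
    | 0 => List.replicate 16 (-128)
    | 1 => [0, 128, -128, 0, 0, 128, -128, 0, 0, 128, -128, 0, 0, 128, -128, 0]
    | 2 => [0, -1280, 1280, 0, 0, -1920, 2048, 64, 0, -2048, 1920, -64, 0, -2432, 2432, 0]
    | 3 => [0, -640, 640, 0, 0, -960, 1024, 0, 0, -1024, 960, 0, 0, -1216, 1216, 0]
    | 4 => [0, 0, 0, 0, 0, -32, -32, -48, 0, 32, 32, 48, 0, 0, 0, 0]
    | 5 => [0, -1728, 1728, 0, 0, -1568, 1536, -16, 0, -1536, 1568, 16, 0, -1440, 1440, 0]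
    | 6 => [0, -864, 864, 0, 0, -784, 768, 0, 0, -768, 784, 0, 0, -720, 720, 0]
    | 7 => [0, 0, 0, 0, -32, -24, -24, -20, 32, 24, 24, 20, 0, 0, 0, 0]
    | 8 => [0, -8, 8, 0, -8, -12, 0, -4, 8, 0, 12, 4, 0, -4, 4, 0]
    | _ => [0, -1, 1, 0, 0, -1, 1, 0, 0, -1, 1, 0, 0, -1, 1, 0]).getD
    (8 * σ.1.1.toNat + 4 * σ.1.2.toNat + 2 * σ.2.1.toNat + σ.2.2.toNat) 0

theorem sum_surplus_advance :
    ∀ n ∈ Finset.range 9, ∀ σ : BunkPair × BunkPair,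
      ∑ K ∈ (s1.filter fun e => e.target = n + 1).powerset, surplus (n + 1) (advance n σ K) =
        surplus n σ := by
  decide +kernel

theorem Finset.sum_powerset_union_of_disjoint {α β : Type*} [DecidableEq α] [AddCommMonoid β]
    {s t : Finset α} (h : Disjoint s t) (f : Finset α → β) :
    ∑ u ∈ (s ∪ t).powerset, f u = ∑ a ∈ s.powerset, ∑ b ∈ t.powerset, f (a ∪ b) := by
  rw [← Finset.sum_product', eq_comm]
  refine Finset.sum_nbij' (fun p => p.1 ∪ p.2) (fun u => (u ∩ s, u ∩ t)) ?_ ?_ ?_ ?_ ?_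
  · rintro ⟨a, b⟩ hab
    simp only [Finset.mem_product, Finset.mem_powerset] at hab ⊢
    exact Finset.union_subset_union hab.1 hab.2
  · intro u _
    simp [Finset.inter_subset_right]
  · rintro ⟨a, b⟩ hab
    simp only [Finset.mem_product, Finset.mem_powerset] at hab
    rw [Finset.disjoint_left] at h
    ext x <;> simp only [Finset.mem_inter, Finset.mem_union]
    · exact ⟨fun hx => hx.1.resolve_right fun hb => h hx.2 (hab.2 hb),
        fun hx => ⟨Or.inl hx, hab.1 hx⟩⟩
    · exact ⟨fun hx => hx.1.resolve_left fun ha => h (hab.1 ha) hx.2,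
        fun hx => ⟨Or.inr hx, hab.2 hx⟩⟩
  · intro u hu
    rw [Finset.mem_powerset] at hu
    simp only [← Finset.inter_union_distrib_left]
    exact Finset.inter_eq_left.2 hu
  · simp

theorem advance_congr {n : ℕ} {H K : Finset (BBEdge ℕ)} (σ : BunkPair × BunkPair)
    (h : ∀ e : BBEdge ℕ, e.target = n + 1 → (e ∈ H ↔ e ∈ K)) :
    advance n σ H = advance n σ K := by
  have hv := h (.vert (n + 1)) rfl
  have hh := fun u ε => h (.horiz u (n + 1) ε) rfl
  simp only [advance, enters, hv, hh]

theorem explore_congr {n : ℕ} {H K : Finset (BBEdge ℕ)}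
    (h : ∀ e : BBEdge ℕ, e.target ≤ n → (e ∈ H ↔ e ∈ K)) : explore H n = explore K n := by
  induction n with
  | zero => rfl
  | succ n ih =>
    rw [explore, explore, ih fun e he => h e (by omega)]
    exact advance_congr _ fun e he => h e he.le

theorem sum_surplus_explore {n : ℕ} (hn : n ≤ 9) :
    ∑ H ∈ (s1.filter fun e => e.target ≤ n).powerset, surplus n (explore H n) = -128 := by
  induction n with
  | zero => decide +kernel
  | succ n ih =>
    have hsplit : (s1.filter fun e => e.target ≤ n + 1) =
        (s1.filter fun e => e.target ≤ n) ∪ s1.filter fun e => e.target = n + 1 := by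
      rw [← Finset.filter_or]
      exact Finset.filter_congr fun e _ => by omega
    have hdisj : Disjoint (s1.filter fun e => e.target ≤ n)
        (s1.filter fun e => e.target = n + 1) :=
      Finset.disjoint_filter.2 fun e _ h₁ h₂ => by omega
    rw [hsplit, Finset.sum_powerset_union_of_disjoint hdisj, ← ih (by omega)]
    refine Finset.sum_congr rfl fun H hH => ?_
    rw [← sum_surplus_advance n (Finset.mem_range.2 (by omega))]
    refine Finset.sum_congr rfl fun K hK => ?_
    rw [Finset.mem_powerset] at hH hK
    have hH' : ∀ e ∈ H, e.target ≤ n := fun e he => (Finset.mem_filter.1 (hH he)).2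
    have hK' : ∀ e ∈ K, e.target = n + 1 := fun e he => (Finset.mem_filter.1 (hK he)).2
    rw [explore, explore_congr (K := H), advance_congr (K := K)]
    · intro e he
      rw [Finset.mem_union, or_iff_right]
      exact fun h => by have := hH' e h; omega
    · intro e he
      rw [Finset.mem_union, or_iff_left]
      exact fun h => by have := hK' e h; omega

/-- The vertex `b` is `a` or the head of a horizontal edge from a vertex reachable from `a`. -/
def bbEnters {V : Type} [DecidableEq V] (H : Finset (BBEdge V)) (a b : V × Bool) : Prop :=
  b = a ∨ ∃ u, BBEdge.horiz u b.1 b.2 ∈ H ∧ bbReach H a (u, b.2)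

theorem bbReach_iff_bbEnters {V : Type} [DecidableEq V] (H : Finset (BBEdge V))
    (a : V × Bool) (w : V) (ε : Bool) :
    bbReach H a (w, ε) ↔
      bbEnters H a (w, ε) ∨ (BBEdge.vert w ∈ H ∧ bbEnters H a (w, !ε)) := by
  have enters_reach : ∀ b, bbEnters H a b → bbReach H a b := by
    rintro b (rfl | ⟨u, hu, hr⟩)
    · exact Relation.ReflTransGen.refl
    · exact hr.tail (Or.inr ⟨rfl, hu⟩)
  constructor
  · suffices ∀ b, bbReach H a b →
        bbEnters H a b ∨ (BBEdge.vert b.1 ∈ H ∧ bbEnters H a (b.1, !b.2)) from this (w, ε)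
    intro b hb
    induction hb with
    | refl => exact Or.inl (Or.inl rfl)
    | @tail b c hab hbc ih =>
      obtain ⟨b₁, b₂⟩ := b
      obtain ⟨c₁, c₂⟩ := c
      rcases hbc with ⟨h₁, h₂, hv⟩ | ⟨h₁, hh⟩
      · simp only at h₁ h₂ hv ih ⊢
        subst h₁
        obtain rfl : b₂ = !c₂ := by cases b₂ <;> cases c₂ <;> simp_all
        rw [Bool.not_not] at ih
        exact ih.elim (fun h => Or.inr ⟨hv, h⟩) fun h => Or.inl h.2
      · simp only at h₁
        subst h₁
        exact Or.inl (Or.inr ⟨b₁, hh, hab⟩)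
  · rintro (h | ⟨hv, h⟩)
    · exact enters_reach _ h
    · exact (enters_reach _ h).tail (Or.inl ⟨rfl, by simp, hv⟩)

open Classical in
/-- The reachability of the two copies of `w` from `1⁻`. -/
noncomputable def reached (H : Finset (BBEdge ℕ)) (w : ℕ) : BunkPair :=
  (decide (bbReach H (1, false) (w, false)), decide (bbReach H (1, false) (w, true)))

theorem reached_entry (H : Finset (BBEdge ℕ)) (w : ℕ) (ε : Bool) :
    (reached H w).entry ε = true ↔ bbReach H (1, false) (w, ε) := by
  cases ε <;> simp [reached, BunkPair.entry]

theorem mem_E1_of_horiz_mem {u v : ℕ} {ε : Bool} (h : BBEdge.horiz u v ε ∈ s1) :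
    (u, v) ∈ E1 := by
  simp only [s1, bbEdges, Finset.mem_union, Finset.mem_image] at h
  rcases h with (⟨_, _, h⟩ | ⟨p, hp, h⟩) | ⟨p, hp, h⟩
  · cases h
  · cases h; exact hp
  · cases h; exact hp

theorem frontier_of_mem_E1 :
    ∀ n ∈ Finset.range 9, ∀ p ∈ E1, p.2 = n + 1 →
      p.1 = (frontierPair n).1 ∨ p.1 = (frontierPair n).2 := by
  decide

theorem frontier_succ :
    ∀ n ∈ Finset.range 9, (frontierPair (n + 1)).2 = n + 1 ∧
      ((frontierPair (n + 1)).1 = (frontierPair n).1 ∨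
        (frontierPair (n + 1)).1 = (frontierPair n).2) := by
  decide

theorem enters_reached {H : Finset (BBEdge ℕ)} (hH : H ⊆ s1) {n : ℕ} (hn : n < 9) (ε : Bool) :
    enters n (reached H (frontierPair n).1, reached H (frontierPair n).2) H ε = true ↔
      bbEnters H (1, false) (n + 1, ε) := by
  simp only [enters, Bool.or_eq_true, Bool.and_eq_true, decide_eq_true_eq, reached_entry, bbEnters,
    Prod.mk.injEq, Nat.add_eq_right, or_assoc]
  refine or_congr_right ⟨?_, ?_⟩
  · rintro (h | h)
    exacts [⟨_, h⟩, ⟨_, h⟩]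
  · rintro ⟨u, hu, hr⟩
    rcases frontier_of_mem_E1 n (Finset.mem_range.2 hn) _ (mem_E1_of_horiz_mem (hH hu)) rfl
      with h | h <;> simp only at h <;> subst h
    exacts [Or.inl ⟨hu, hr⟩, Or.inr ⟨hu, hr⟩]

theorem reached_zero {H : Finset (BBEdge ℕ)} (hH : H ⊆ s1) : reached H 0 = (false, false) := by
  have hE : ∀ p ∈ E1, p.2 ≠ 0 := by decide
  have hv : BBEdge.vert 0 ∉ H := fun h => absurd (hH h) (by decide)
  have key : ∀ ε, ¬ bbReach H (1, false) (0, ε) := by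
    intro ε
    rw [bbReach_iff_bbEnters]
    rintro ((h | ⟨u, hu, -⟩) | h)
    · simp at h
    · exact hE _ (mem_E1_of_horiz_mem (hH hu)) rfl
    · exact hv h.1
  simp [reached, key]

theorem explore_eq_reached {H : Finset (BBEdge ℕ)} (hH : H ⊆ s1) (hT : postCond T1 H) {n : ℕ}
    (hn : n ≤ 9) :
    explore H n = (reached H (frontierPair n).1, reached H (frontierPair n).2) := by
  induction n with
  | zero => simp [explore, frontierPair, reached_zero hH]
  | succ n ih =>
    obtain ⟨h₂, h₁⟩ := frontier_succ n (Finset.mem_range.2 hn)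
    rw [explore, ih (by omega), advance, if_neg fun h => h.2 (hT _ h.1), h₂]
    refine Prod.ext ?_ (Prod.ext ?_ ?_)
    · dsimp only
      split_ifs with h
      · rw [h]
      · rw [h₁.resolve_left h]
    · rw [Bool.eq_iff_iff]
      simp only [Bool.or_eq_true, Bool.and_eq_true, decide_eq_true_eq, enters_reached hH hn]
      simp [reached, bbReach_iff_bbEnters H (1, false) (n + 1)]
    · rw [Bool.eq_iff_iff]
      simp only [Bool.or_eq_true, Bool.and_eq_true, decide_eq_true_eq, enters_reached hH hn]
      simp [reached, bbReach_iff_bbEnters H (1, false) (n + 1)]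

theorem advance_of_unreached {n : ℕ} (hn : n ≠ 0) (H : Finset (BBEdge ℕ)) :
    advance n ((false, false), (false, false)) H = ((false, false), (false, false)) := by
  have h : ∀ ε, enters n ((false, false), (false, false)) H ε = false := by
    intro ε
    cases ε <;> simp [enters, hn, BunkPair.entry]
  simp [advance, h]

theorem explore_of_not_postCond {H : Finset (BBEdge ℕ)} (hT : ¬ postCond T1 H) :
    explore H 9 = ((false, false), (false, false)) := by
  simp only [postCond, not_forall] at hT
  obtain ⟨t, ht, hv⟩ := hT
  obtain ⟨h₁, h₉⟩ : 1 ≤ t ∧ t ≤ 9 := (show ∀ t ∈ T1, 1 ≤ t ∧ t ≤ 9 by decide) t ht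
  refine Nat.le_induction ?_ (fun n hn ih => ?_) 9 h₉
  · obtain ⟨n, rfl⟩ := Nat.exists_eq_add_of_le' h₁
    rw [explore, advance, if_pos ⟨ht, hv⟩]
  · rw [explore, ih, advance_of_unreached (by omega)]

open Classical in
theorem surplus_explore {H : Finset (BBEdge ℕ)} (hH : H ⊆ s1) :
    surplus 9 (explore H 9) =
      (if bbReach H (1, false) (9, false) ∧ postCond T1 H then 1 else 0) -
        (if bbReach H (1, false) (9, true) ∧ postCond T1 H then 1 else 0) := by
  by_cases hT : postCond T1 H
  · have hs : ∀ p q : BunkPair, surplus 9 (p, q) = q.1.toNat - q.2.toNat := by decide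
    rw [explore_eq_reached hH hT le_rfl, hs]
    simp only [reached, frontierPair, hT, and_true]
    split_ifs <;> simp [*]
  · rw [explore_of_not_postCond hT]
    simp only [hT, and_false, if_false]
    rfl

theorem Pr_lt_Pr {V : Type} [DecidableEq V] {s : Finset (BBEdge V)}
    {A B : Finset (BBEdge V) → Prop} [DecidablePred A] [DecidablePred B]
    (h : (s.powerset.filter A).card < (s.powerset.filter B).card) : Pr s A < Pr s B := by
  rw [Pr, Pr]
  refine div_lt_div_of_pos_right ?_ (by simp)
  rw [Nat.cast_lt]
  convert h

theorem Pr_pos {V : Type} [DecidableEq V] {s : Finset (BBEdge V)}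
    {A : Finset (BBEdge V) → Prop} (h : A s) : 0 < Pr s A := by
  classical
  rw [Pr]
  refine div_pos (Nat.cast_pos.2 (Finset.card_pos.2 ⟨s, ?_⟩)) (by simp)
  simp [h]

/-- Proposition 1 of the paper: the Bunkbed Conjecture fails for the
conditioned model: for `G₁` with `T = {2,5,8}` and `p = 1/2`, the conditioned bunkbed
percolation `𝓔_T` satisfies `ℙ(1⁻ → 9⁻) < ℙ(1⁻ → 9⁺)`. -/
theorem conditioned_bunkbed_counterexample :
    CondPr s1 (postCond T1) (fun H => bbReach H (1, false) (9, false)) <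
      CondPr s1 (postCond T1) (fun H => bbReach H (1, false) (9, true)) := by
  classical
  have hpos : 0 < Pr s1 (postCond T1) := Pr_pos fun t ht =>
    (show ∀ t ∈ T1, BBEdge.vert t ∈ s1 by decide) t ht
  refine div_lt_div_of_pos_right (Pr_lt_Pr ?_) hpos
  have hs : (s1.filter fun e => e.target ≤ 9) = s1 := by decide
  have hsum := sum_surplus_explore le_rfl
  rw [hs, Finset.sum_congr rfl fun H hH => surplus_explore (Finset.mem_powerset.1 hH),
    Finset.sum_sub_distrib, Finset.sum_boole, Finset.sum_boole] at hsum
  beta_reduce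
  omega
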